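/- arXiv:2111.14280 — 3 statements merged into one kernel-verified Lean document; each statement's English description precedes it below -/
import Mathlib

section
/- Let K₁, K₂ be strictly convex bodies in ℂⁿ with n ≥ 3, with interior points p₁ ∈ int K₁ and p₂ ∈ int K₂. Suppose that for every complex hyperplane H through the origin, the section (H + p₁) ∩ K₁ is positively homothetic to (H + p₂) ∩ K₂. Then K₁ is positively homothetic to K₂. -/
def IsConvexBody {n : ℕ} (K : Set (EuclideanSpace ℂ (Fin n))) : Prop :=
  IsCompact K ∧ Convex ℝ K ∧ (interior K).Nonempty

/-- `B` is the image of `A` under a positive homothety (ratio `r > 0`). -/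
def IsPositivelyHomothetic {n : ℕ} (A B : Set (EuclideanSpace ℂ (Fin n))) : Prop :=
  ∃ (r : ℝ) (c : EuclideanSpace ℂ (Fin n)), 0 < r ∧ B = (fun x => r • x + c) '' A

/-! Put both centres `p₁`, `p₂` at the origin, and let `A`, `B` be the translated bodies. Scaling
`B` until it just fits inside `A` produces points `x` of `A` and `M • x` of `B` on a common ray, at
which one functional `f` is maximal on `A` and on `B` respectively. If a hyperplane `H` contains
`x`, its section homothety carries maximizers of `f` to maximizers of `f`, so by strict convexity
of `B` it sends `x` to `M • x`. It therefore preserves the line `ℝx`, and its ratio is the ratio of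
the lengths of the chords that this line cuts from `B` and from `A`. All the hyperplanes through
`x` thus share a single homothety. As `n ≥ 3`, every vector lies in a common hyperplane with `x`,
so this homothety carries `A` onto `B`.
-/

open Set Topology Module

section PositivelyHomothetic

variable {V : Type*} [AddCommGroup V] [Module ℝ V] {A B : Set V}

/-- `B` is the image of `A` under a homothety of positive ratio. This extends
`IsPositivelyHomothetic`, to which it unfolds on `EuclideanSpace ℂ (Fin n)`, to all real vector
spaces. -/
def PositivelyHomothetic (A B : Set V) : Prop :=
  ∃ (r : ℝ) (c : V), 0 < r ∧ B = (fun x => r • x + c) '' A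

theorem PositivelyHomothetic.symm (h : PositivelyHomothetic A B) : PositivelyHomothetic B A := by
  obtain ⟨r, c, hr, rfl⟩ := h
  exact ⟨r⁻¹, -(r⁻¹ • c), inv_pos.2 hr, by simp [image_image, hr.ne']⟩

theorem PositivelyHomothetic.trans {C : Set V} (hAB : PositivelyHomothetic A B)
    (hBC : PositivelyHomothetic B C) : PositivelyHomothetic A C := by
  obtain ⟨r, c, hr, rfl⟩ := hAB
  obtain ⟨s, d, hs, rfl⟩ := hBC
  exact ⟨s * r, s • c + d, mul_pos hs hr, by simp [image_image, mul_smul, add_assoc]⟩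

theorem PositivelyHomothetic.nontrivial (h : PositivelyHomothetic A B) (hA : A.Nontrivial) :
    B.Nontrivial := by
  obtain ⟨r, c, hr, rfl⟩ := h
  exact hA.image ((add_left_injective c).comp (smul_right_injective V hr.ne'))

theorem positivelyHomothetic_image_add_right (A : Set V) (p : V) :
    PositivelyHomothetic A ((· + p) '' A) :=
  ⟨1, p, one_pos, by simp⟩

theorem positivelyHomothetic_image_add_right_iff {p q : V} :
    PositivelyHomothetic ((· + p) '' A) ((· + q) '' B) ↔ PositivelyHomothetic A B :=
  have hA := positivelyHomothetic_image_add_right A p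
  have hB := positivelyHomothetic_image_add_right B q
  ⟨fun h => (hA.trans h).trans hB.symm, fun h => (hA.symm.trans h).trans hB⟩

end PositivelyHomothetic

section Field

variable {K E : Type*} [Field K] [AddCommGroup E] [Module K E]

theorem inter_eq_image_smul_add_of_le {A B : Set E} {H L : Submodule K E} (hLH : L ≤ H)
    {r : K} (hr : r ≠ 0) {c : E} (hc : c ∈ L)
    (h : (H ∩ B : Set E) = (fun z => r • z + c) '' (H ∩ A)) :
    (L ∩ B : Set E) = (fun z => r • z + c) '' (L ∩ A) := by
  have preimage_L : (fun z => r • z + c) ⁻¹' L = L := by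
    ext z
    simp [L.add_mem_iff_left hc, L.smul_mem_iff hr]
  calc (L ∩ B : Set E) = (H ∩ B : Set E) ∩ L := by
        rw [inter_right_comm, inter_eq_right.2 (SetLike.coe_subset_coe.2 hLH)]
    _ = (fun z => r • z + c) '' (H ∩ A ∩ L) := by
        rw [h, ← image_inter_preimage, preimage_L]
    _ = (fun z => r • z + c) '' (L ∩ A) := by
        rw [inter_right_comm, inter_eq_right.2 (SetLike.coe_subset_coe.2 hLH)]

theorem exists_finrank_add_one_eq_of_lt_top [FiniteDimensional K E] {W : Submodule K E}
    (hW : W < ⊤) :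
    ∃ H : Submodule K E, finrank K H + 1 = finrank K E ∧ W ≤ H := by
  obtain ⟨f, hf, hWf⟩ := W.exists_le_ker_of_lt_top hW
  exact ⟨f.ker, Dual.finrank_ker_add_one_of_ne_zero hf, hWf⟩

theorem exists_hyperplane_mem_mem (hE : 2 < finrank K E) (x y : E) :
    ∃ H : Submodule K E, finrank K H + 1 = finrank K E ∧ x ∈ H ∧ y ∈ H := by
  classical
  have : FiniteDimensional K E := FiniteDimensional.of_finrank_pos (by omega)
  have span_lt_top : Submodule.span K {x, y} < ⊤ := by
    refine Submodule.lt_top_of_finrank_lt_finrank (lt_of_le_of_lt ?_ hE)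
    calc finrank K (Submodule.span K {x, y}) ≤ Finset.card {x, y} := by
          rw [← Finset.coe_pair]
          exact finrank_span_finset_le_card _
      _ ≤ 2 := Finset.card_le_two
  obtain ⟨H, hH, hle⟩ := exists_finrank_add_one_eq_of_lt_top span_lt_top
  exact ⟨H, hH, hle (Submodule.mem_span_of_mem (by simp)),
    hle (Submodule.mem_span_of_mem (by simp))⟩

end Field

section NormedSpace

variable {V : Type*} [NormedAddCommGroup V] [NormedSpace ℝ V] {A B : Set V}

theorem diam_image_smul_add {r : ℝ} (hr : 0 ≤ r) (c : V) (S : Set V) :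
    Metric.diam ((fun z => r • z + c) '' S) = r * Metric.diam S := by
  calc Metric.diam ((fun z => r • z + c) '' S)
      = Metric.diam (IsometryEquiv.addRight c '' ((r • ·) '' S)) := by rw [image_image]; rfl
    _ = r * Metric.diam S := by
      rw [IsometryEquiv.diam_image, image_smul, diam_smul₀, Real.norm_of_nonneg hr]

theorem nontrivial_inter_of_mem_nhds_zero {L : Submodule ℝ V} (hL : L ≠ ⊥) (hA : A ∈ 𝓝 0) :
    (L ∩ A : Set V).Nontrivial := by
  obtain ⟨v, hvL, hv⟩ := L.exists_mem_ne_zero_of_ne_bot hL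
  obtain ⟨r, hr, a, ha, rfl⟩ := (absorbent_nhds_zero hA).gauge_set_nonempty (x := v)
  have haL : a ∈ L := (L.smul_mem_iff hr.ne').1 hvL
  exact ⟨a, ⟨haL, ha⟩, 0, ⟨L.zero_mem, mem_of_mem_nhds hA⟩, right_ne_zero_of_smul hv⟩

theorem subsingleton_toExposed_of_strictConvex (hB : StrictConvex ℝ B) {f : StrongDual ℝ V}
    (hf : f ≠ 0) : (f.toExposed B).Subsingleton := by
  rintro u ⟨hu, hu_max⟩ v ⟨hv, hv_max⟩
  by_contra huv
  have hm := hB hu hv huv (a := 1 / 2) (b := 1 / 2) (by norm_num) (by norm_num) (by norm_num)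
  have f_mid : f ((1 / 2 : ℝ) • u + (1 / 2 : ℝ) • v) = f u := by
    simp only [map_add, map_smul, smul_eq_mul, (hu_max v hv).antisymm (hv_max u hu)]
    ring
  have mid_max : IsLocalMax f ((1 / 2 : ℝ) • u + (1 / 2 : ℝ) • v) := by
    filter_upwards [mem_interior_iff_mem_nhds.1 hm] with b hb
    exact (hu_max b hb).trans_eq f_mid.symm
  exact hf (mid_max.hasFDerivAt_eq_zero f.hasFDerivAt)

theorem exists_smul_mem_frontier_forall_smul_mem (hA : Convex ℝ A) (hA0 : A ∈ 𝓝 0)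
    (hAcl : IsClosed A) (hAb : Bornology.IsBounded A) (hB : IsCompact B) (hBnt : B.Nontrivial) :
    ∃ r : ℝ, 0 < r ∧ (∀ b ∈ B, r • b ∈ A) ∧ ∃ y ∈ B, r • y ∈ frontier A := by
  obtain ⟨y, hy, y_max⟩ :=
    hB.exists_isMaxOn hBnt.nonempty (continuous_gauge hA hA0).continuousOn
  have gauge_y_pos : 0 < gauge A y := by
    obtain ⟨b, hb, hb0⟩ := hBnt.exists_ne 0
    exact ((gauge_pos (absorbent_nhds_zero hA0)
      (NormedSpace.isVonNBounded_of_isBounded ℝ hAb)).2 hb0).trans_le (y_max hb)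
  have gauge_inv_smul (b : V) : gauge A ((gauge A y)⁻¹ • b) = (gauge A y)⁻¹ * gauge A b :=
    gauge_smul_of_nonneg (inv_nonneg.2 gauge_y_pos.le) b
  refine ⟨(gauge A y)⁻¹, inv_pos.2 gauge_y_pos, fun b hb => ?_, y, hy, ?_⟩
  · have gauge_le_one : gauge A ((gauge A y)⁻¹ • b) ≤ 1 := by
      rw [gauge_inv_smul, inv_mul_le_one₀ gauge_y_pos]
      exact y_max hb
    exact hAcl.closure_subset ((gauge_le_one_iff_mem_closure hA hA0).1 gauge_le_one)
  · rw [← gauge_eq_one_iff_mem_frontier hA hA0, gauge_inv_smul, inv_mul_cancel₀ gauge_y_pos.ne']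

theorem exists_mem_toExposed_smul_mem_toExposed (hA : Convex ℝ A) (hA0 : A ∈ 𝓝 0)
    (hAcl : IsClosed A) (hAb : Bornology.IsBounded A) (hB : IsCompact B) (hBnt : B.Nontrivial) :
    ∃ x ≠ 0, ∃ (M : ℝ) (f : StrongDual ℝ V), f ≠ 0 ∧ x ∈ f.toExposed A ∧
      M • x ∈ f.toExposed B := by
  obtain ⟨r, hr, hBA, y, hy, hry⟩ :=
    exists_smul_mem_frontier_forall_smul_mem hA hA0 hAcl hAb hB hBnt
  have zero_mem_interior : (0 : V) ∈ interior A := mem_interior_iff_mem_nhds.2 hA0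
  obtain ⟨f, hf, f_le⟩ :=
    geometric_hahn_banach_of_nonempty_interior_point hA hry.2 ⟨0, zero_mem_interior⟩
  refine ⟨r • y, fun h => hry.2 (h ▸ zero_mem_interior), r⁻¹, f, hf, ⟨hBA y hy, f_le⟩, ?_⟩
  rw [inv_smul_smul₀ hr.ne']
  refine ⟨hy, fun b hb => le_of_mul_le_mul_left ?_ hr⟩
  simpa only [map_smul, smul_eq_mul] using f_le _ (hBA b hb)

theorem smul_add_eq_of_mem_toExposed (hB : StrictConvex ℝ B) {f : StrongDual ℝ V} (hf : f ≠ 0)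
    {S H : Set V} {x y c : V} {r : ℝ} (hr : 0 ≤ r) (h : H ∩ B = (fun z => r • z + c) '' S)
    (hx : x ∈ f.toExposed S) (hyH : y ∈ H) (hy : y ∈ f.toExposed B) : r • x + c = y := by
  have image_mem : r • x + c ∈ H ∩ B := h ▸ mem_image_of_mem _ hx.1
  obtain ⟨z, hz, rfl⟩ : y ∈ (fun z => r • z + c) '' S := h ▸ ⟨hyH, hy.1⟩
  have f_le : f (r • z + c) ≤ f (r • x + c) := by
    simp only [map_add, map_smul, smul_eq_mul]
    gcongr
    exact hx.2 z hz
  have image_max : r • x + c ∈ f.toExposed B :=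
    ⟨image_mem.2, fun b hb => (hy.2 b hb).trans f_le⟩
  exact subsingleton_toExposed_of_strictConvex hB hf image_max hy

theorem eq_diam_div_diam_of_inter_eq_image_smul_add (hA0 : A ∈ 𝓝 0) (hAb : Bornology.IsBounded A)
    {H L : Submodule ℝ V} (hLH : L ≤ H) (hL : L ≠ ⊥) {r : ℝ} (hr : 0 < r) {c : V} (hc : c ∈ L)
    (h : (H ∩ B : Set V) = (fun z => r • z + c) '' (H ∩ A)) :
    r = Metric.diam (L ∩ B : Set V) / Metric.diam (L ∩ A : Set V) := by
  have diam_pos : 0 < Metric.diam (L ∩ A : Set V) :=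
    Metric.diam_pos (nontrivial_inter_of_mem_nhds_zero hL hA0) (hAb.subset inter_subset_right)
  rw [eq_div_iff diam_pos.ne', inter_eq_image_smul_add_of_le hLH hr.ne' hc h,
    diam_image_smul_add hr.le]

variable {ι : Type*} {H : ι → Submodule ℝ V}

theorem positivelyHomothetic_of_inter [Nontrivial V] (hA : IsCompact A) (hAc : Convex ℝ A)
    (hA0 : A ∈ 𝓝 0) (hB : IsCompact B) (hBc : StrictConvex ℝ B)
    (hH : ∀ x y, ∃ i, x ∈ H i ∧ y ∈ H i)
    (hsec : ∀ i, PositivelyHomothetic (H i ∩ A : Set V) (H i ∩ B)) :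
    PositivelyHomothetic A B := by
  have B_nontrivial : B.Nontrivial := by
    obtain ⟨v, hv⟩ := exists_ne (0 : V)
    obtain ⟨i, hvi, -⟩ := hH v v
    have hi : H i ≠ ⊥ := (H i).ne_bot_iff.2 ⟨v, hvi, hv⟩
    exact ((hsec i).nontrivial (nontrivial_inter_of_mem_nhds_zero hi hA0)).mono inter_subset_right
  obtain ⟨x, hx, M, f, hf, hxA, hxB⟩ :=
    exists_mem_toExposed_smul_mem_toExposed hAc hA0 hA.isClosed hA.isBounded hB B_nontrivial
  let L := Submodule.span ℝ {x}
  have hxL : x ∈ L := Submodule.mem_span_singleton_self x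
  let r := Metric.diam (L ∩ B : Set V) / Metric.diam (L ∩ A : Set V)
  have common_homothety (i : ι) (hxi : x ∈ H i) :
      0 < r ∧ (H i ∩ B : Set V) = (fun z => r • z + (M • x - r • x)) '' (H i ∩ A) := by
    obtain ⟨s, c, hs, h⟩ := hsec i
    have hc : c = M • x - s • x := by
      rw [eq_sub_iff_add_eq', smul_add_eq_of_mem_toExposed hBc hf hs.le h
        ⟨⟨hxi, hxA.1⟩, fun a ha => hxA.2 a ha.2⟩ ((H i).smul_mem M hxi) hxB]
    have hcL : c ∈ L := hc ▸ L.sub_mem (L.smul_mem M hxL) (L.smul_mem s hxL)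
    have hsr : s = r := eq_diam_div_diam_of_inter_eq_image_smul_add hA0 hA.isBounded
      ((Submodule.span_singleton_le_iff_mem x (H i)).2 hxi)
      (mt Submodule.span_singleton_eq_bot.1 hx) hs hcL h
    exact hsr ▸ ⟨hs, hc ▸ h⟩
  obtain ⟨i₀, hxi₀, -⟩ := hH x x
  refine ⟨r, M • x - r • x, (common_homothety i₀ hxi₀).1, Subset.antisymm (fun b hb => ?_) ?_⟩
  · obtain ⟨i, hxi, hbi⟩ := hH x b
    exact image_mono inter_subset_right ((common_homothety i hxi).2.subset ⟨hbi, hb⟩)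
  · rintro _ ⟨a, ha, rfl⟩
    obtain ⟨i, hxi, hai⟩ := hH x a
    exact ((common_homothety i hxi).2.superset (mem_image_of_mem _ ⟨hai, ha⟩)).2

theorem stmt6_general [Nontrivial V] {K₁ K₂ : Set V} (hK₁ : IsCompact K₁) (hc₁ : Convex ℝ K₁)
    (hK₂ : IsCompact K₂) (hs₂ : StrictConvex ℝ K₂) {p₁ p₂ : V} (hp₁ : p₁ ∈ interior K₁)
    (hH : ∀ x y, ∃ i, x ∈ H i ∧ y ∈ H i)
    (hsec : ∀ i, PositivelyHomothetic (((· + p₁) '' (H i : Set V)) ∩ K₁)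
      (((· + p₂) '' (H i : Set V)) ∩ K₂)) :
    PositivelyHomothetic K₁ K₂ := by
  have image_preimage (p : V) (K : Set V) : (· + p) '' ((· + p) ⁻¹' K) = K :=
    image_preimage_eq K (add_right_surjective p)
  have preimage_mem_nhds : (· + p₁) ⁻¹' K₁ ∈ 𝓝 (0 : V) :=
    (continuous_add_const p₁).continuousAt.preimage_mem_nhds
      (by simpa only [zero_add] using mem_interior_iff_mem_nhds.1 hp₁)
  rw [← image_preimage p₁ K₁, ← image_preimage p₂ K₂, positivelyHomothetic_image_add_right_iff]
  refine positivelyHomothetic_of_inter (H := H)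
    ((Homeomorph.addRight p₁).isCompact_preimage.2 hK₁) (hc₁.translate_preimage_left p₁)
    preimage_mem_nhds ((Homeomorph.addRight p₂).isCompact_preimage.2 hK₂)
    (hs₂.preimage_add_left p₂) hH fun i => ?_
  rw [← positivelyHomothetic_image_add_right_iff (p := p₁) (q := p₂), image_inter_preimage,
    image_inter_preimage]
  exact hsec i

end NormedSpace

theorem stmt6 {n : ℕ} (hn : 3 ≤ n)
    (K₁ K₂ : Set (EuclideanSpace ℂ (Fin n)))
    (hK₁ : IsConvexBody K₁) (hK₂ : IsConvexBody K₂)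
    (hs₁ : StrictConvex ℝ K₁) (hs₂ : StrictConvex ℝ K₂)
    (p₁ p₂ : EuclideanSpace ℂ (Fin n))
    (hp₁ : p₁ ∈ interior K₁) (hp₂ : p₂ ∈ interior K₂)
    (hsec : ∀ H : Submodule ℂ (EuclideanSpace ℂ (Fin n)),
      Module.finrank ℂ H = n - 1 →
      IsPositivelyHomothetic (((· + p₁) '' (H : Set (EuclideanSpace ℂ (Fin n)))) ∩ K₁)
        (((· + p₂) '' (H : Set (EuclideanSpace ℂ (Fin n)))) ∩ K₂)) :
    IsPositivelyHomothetic K₁ K₂ := by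
  have : NeZero n := ⟨by omega⟩
  refine stmt6_general hK₁.1 hK₁.2.1 hK₂.1 hs₂ hp₁
    (H := fun H : {H : Submodule ℂ (EuclideanSpace ℂ (Fin n)) // finrank ℂ H = n - 1} =>
      H.1.restrictScalars ℝ) (fun x y => ?_) fun H => hsec H.1 H.2
  obtain ⟨H, hH, hxy⟩ := exists_hyperplane_mem_mem (K := ℂ)
    (by rwa [finrank_euclideanSpace_fin]) x y
  exact ⟨⟨H, Nat.eq_sub_of_add_eq (hH.trans finrank_euclideanSpace_fin)⟩, hxy⟩
end

section
/- Let K₁, K₂ be strictly convex bodies in ℂⁿ with n ≥ 3, with p₁ ∈ int K₁ and p₂ ∈ int K₂. If for every complex hyperplane H through the origin the section (H + p₁) ∩ K₁ is a translate of (H + p₂) ∩ K₂, then K₁ is a translate of K₂. -/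
/-- `B` is a translate of `A`. -/
def IsTranslate {n : ℕ} (A B : Set (EuclideanSpace ℂ (Fin n))) : Prop :=
  ∃ c : EuclideanSpace ℂ (Fin n), B = (· + c) '' A

/-
Put `p₁ = p₂ = 0` and let `x` maximise the gauge of `K₂` on the compact set `K₁`. Then `K₁` lies
in a homothetic copy of `K₂` whose boundary passes through `x`, so a functional `f` supporting
that copy at `x` is maximised on `K₁` at `x` and on `K₂` at the rescaled point `c • x`, there
uniquely by strict convexity. Every hyperplane `H` through `x` contains both points, and a
translation taking `K₂ ∩ H` to `K₁ ∩ H` matches the maximisers of `f`, hence is the translation by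
`x - c • x`, whatever `H` is. In dimension at least three any point shares such a hyperplane with
`x`.
-/

open Module

section Translates

variable {G : Type*} [AddCommGroup G]

theorem exists_image_add_right_eq_iff (p q : G) {X Y : Set G} :
    (∃ c, (· + p) '' X = (· + c) '' ((· + q) '' Y)) ↔ ∃ d, X = (· + d) '' Y := by
  simp only [Set.image_image, add_assoc]
  constructor
  · rintro ⟨c, h⟩
    refine ⟨q + c - p, (add_left_injective p).image_injective ?_⟩
    simpa only [Set.image_image, add_assoc, sub_add_cancel] using h
  · rintro ⟨d, rfl⟩
    refine ⟨d + p - q, ?_⟩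
    simp only [Set.image_image, add_assoc, add_sub_cancel]

theorem eq_sub_of_image_add_right_of_isMaxOn {F : Type*} [FunLike F G ℝ]
    [AddMonoidHomClass F G ℝ] {f : F} {T : Set G} {x y d : G} (hy : y ∈ T)
    (hy_unique : ∀ t ∈ T, f y ≤ f t → t = y) (hx : x ∈ (· + d) '' T)
    (hx_max : IsMaxOn f ((· + d) '' T) x) : d = x - y := by
  obtain ⟨t, ht, rfl⟩ := hx
  have h : f (y + d) ≤ f (t + d) := hx_max (Set.mem_image_of_mem _ hy)
  rw [map_add, map_add, add_le_add_iff_right] at h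
  rw [hy_unique t ht h, add_sub_cancel_left]

end Translates

section TopologicalVectorSpace

variable {E : Type*} [AddCommGroup E] [Module ℝ E] [TopologicalSpace E] [ContinuousSMul ℝ E]
  {B : Set E}

theorem mem_exposedPoints_of_strictConvex [IsTopologicalAddGroup E] (hB : StrictConvex ℝ B)
    {y : E} (hyB : y ∈ B) (hy : y ∉ interior B) : y ∈ B.exposedPoints ℝ := by
  obtain ⟨f, hf⟩ := geometric_hahn_banach_open_point hB.convex.interior isOpen_interior hy
  have hlt : ∀ b ∈ B, b ≠ y → f b < f y := by
    intro b hb hby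
    have hmid := hf _ (hB hb hyB hby one_half_pos one_half_pos (add_halves 1))
    simp only [map_add, map_smul, smul_eq_mul] at hmid
    linarith
  refine ⟨hyB, f, fun b hb => ?_⟩
  rcases eq_or_ne b y with rfl | hby
  · simp only [le_refl, imp_self, and_self]
  · exact ⟨(hlt b hb hby).le, fun h => absurd h (hlt b hb hby).not_ge⟩

theorem nontrivial_inter_of_zero_mem_interior (hB0 : (0 : E) ∈ interior B) {S : Submodule ℝ E}
    (hS : S ≠ ⊥) : ((S : Set E) ∩ B).Nontrivial := by
  obtain ⟨v, hvS, hv⟩ := S.ne_bot_iff.1 hS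
  have hlim : Filter.Tendsto (fun t : ℝ => t • v) (nhdsWithin 0 {0}ᶜ) (nhds 0) := by
    have hcont : Continuous fun t : ℝ => t • v := by fun_prop
    simpa only [zero_smul] using (hcont.tendsto 0).mono_left nhdsWithin_le_nhds
  obtain ⟨t, htB, ht⟩ :=
    ((hlim.eventually (mem_interior_iff_mem_nhds.1 hB0)).and self_mem_nhdsWithin).exists
  exact ⟨t • v, ⟨S.smul_mem t hvS, htB⟩, 0, ⟨S.zero_mem, interior_subset hB0⟩, smul_ne_zero ht hv⟩

end TopologicalVectorSpace

section NormedSpace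

variable {E : Type*} [NormedAddCommGroup E] [NormedSpace ℝ E] {A B : Set E}

theorem exists_isMaxOn_exposing_smul (hA : IsCompact A) (hA0 : ∃ a ∈ A, a ≠ 0)
    (hBc : IsClosed B) (hBb : Bornology.IsBounded B) (hBs : StrictConvex ℝ B)
    (hB0 : (0 : E) ∈ interior B) :
    ∃ x ∈ A, ∃ c : ℝ, ∃ f : StrongDual ℝ E,
      IsMaxOn f A x ∧ c • x ∈ B ∧ ∀ b ∈ B, f (c • x) ≤ f b → b = c • x := by
  have hBn : B ∈ nhds (0 : E) := mem_interior_iff_mem_nhds.1 hB0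
  obtain ⟨a, haA, ha⟩ := hA0
  obtain ⟨x, hxA, hx⟩ :=
    hA.exists_isMaxOn ⟨a, haA⟩ (continuous_gauge hBs.convex hBn).continuousOn
  have hpos : 0 < gauge B x :=
    ((gauge_pos (absorbent_nhds_zero hBn)
      ((NormedSpace.isVonNBounded_iff ℝ).2 hBb)).2 ha).trans_le (hx haA)
  set c := (gauge B x)⁻¹ with hc
  have hc0 : 0 < c := inv_pos.2 hpos
  have hgauge (z : E) : gauge B (c • z) = c * gauge B z := by
    rw [gauge_smul_of_nonneg hc0.le, smul_eq_mul]
  have hAB : ∀ z ∈ A, c • z ∈ B := by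
    intro z hz
    rw [← hBc.closure_eq, ← gauge_le_one_iff_mem_closure hBs.convex hBn, hgauge, hc,
      inv_mul_le_one₀ hpos]
    exact hx hz
  have hxB : c • x ∉ interior B := by
    rw [← gauge_lt_one_iff_mem_interior hBs.convex hBn, hgauge, hc, inv_mul_cancel₀ hpos.ne']
    exact lt_irrefl 1
  obtain ⟨-, f, hf⟩ := mem_exposedPoints_of_strictConvex hBs (hAB x hxA) hxB
  refine ⟨x, hxA, c, f, fun z hz => ?_, hAB x hxA, fun b hb => (hf b hb).2⟩
  have h := (hf _ (hAB z hz)).1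
  rw [map_smul, map_smul, smul_eq_mul, smul_eq_mul] at h
  exact le_of_mul_le_mul_left h hc0

theorem exists_eq_image_add_right_of_sections [Nontrivial E] (hA : IsCompact A) (hB : IsCompact B)
    (hBs : StrictConvex ℝ B) (hB0 : (0 : E) ∈ interior B) {ι : Type*} (S : ι → Submodule ℝ E)
    (hS : ∀ x y, ∃ i, x ∈ S i ∧ y ∈ S i)
    (hsec : ∀ i, ∃ d, (S i : Set E) ∩ A = (· + d) '' ((S i : Set E) ∩ B)) :
    ∃ d, A = (· + d) '' B := by
  have hA0 : ∃ a ∈ A, a ≠ 0 := by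
    obtain ⟨v, hv⟩ := exists_ne (0 : E)
    obtain ⟨i, hvi, -⟩ := hS v v
    obtain ⟨d, hd⟩ := hsec i
    have hne : ((S i : Set E) ∩ A).Nontrivial := hd ▸
      (nontrivial_inter_of_zero_mem_interior hB0 ((S i).ne_bot_iff.2 ⟨v, hvi, hv⟩)).image
        (add_left_injective d)
    exact (hne.mono Set.inter_subset_right).exists_ne 0
  obtain ⟨x, hxA, c, f, hfA, hcxB, hfB⟩ :=
    exists_isMaxOn_exposing_smul hA hA0 hB.isClosed hB.isBounded hBs hB0
  have hcommon : ∀ y, ∃ i, y ∈ S i ∧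
      (S i : Set E) ∩ A = (· + (x - c • x)) '' ((S i : Set E) ∩ B) := by
    intro y
    obtain ⟨i, hxi, hyi⟩ := hS x y
    obtain ⟨d, hd⟩ := hsec i
    have hxA' : x ∈ (· + d) '' ((S i : Set E) ∩ B) := hd ▸ ⟨hxi, hxA⟩
    have hmax : IsMaxOn f ((· + d) '' ((S i : Set E) ∩ B)) x :=
      hd ▸ hfA.on_subset Set.inter_subset_right
    have hcx : c • x ∈ (S i : Set E) ∩ B := ⟨(S i).smul_mem c hxi, hcxB⟩
    have hdx : d = x - c • x :=
      eq_sub_of_image_add_right_of_isMaxOn hcx (fun b hb => hfB b hb.2) hxA' hmax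
    exact ⟨i, hyi, hdx ▸ hd⟩
  refine ⟨x - c • x, Set.Subset.antisymm (fun a ha => ?_) (Set.image_subset_iff.2 fun b hb => ?_)⟩
  · obtain ⟨i, hai, hi⟩ := hcommon a
    exact Set.image_mono Set.inter_subset_right (hi.subset ⟨hai, ha⟩)
  · obtain ⟨i, hbi, hi⟩ := hcommon b
    exact (hi.symm.subset (Set.mem_image_of_mem _ ⟨hbi, hb⟩)).2

end NormedSpace

section Hyperplanes

variable {𝕜 V : Type*} [DivisionRing 𝕜] [AddCommGroup V] [Module 𝕜 V]

theorem exists_le_finrank_add_one_eq [FiniteDimensional 𝕜 V] {W : Submodule 𝕜 V}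
    (hW : W ≠ ⊤) :
    ∃ H : Submodule 𝕜 V, finrank 𝕜 H + 1 = finrank 𝕜 V ∧ W ≤ H := by
  obtain ⟨H, hH, hWH⟩ := (eq_top_or_exists_le_coatom W).resolve_left hW
  have hquot : finrank 𝕜 (V ⧸ H) = 1 :=
    isSimpleModule_iff_finrank_eq_one.1 (isSimpleModule_iff_isCoatom.2 hH)
  refine ⟨H, ?_, hWH⟩
  rw [← H.finrank_quotient_add_finrank, hquot, add_comm]

theorem exists_finrank_add_one_eq_mem_mem (hV : 3 ≤ finrank 𝕜 V) (x y : V) :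
    ∃ H : Submodule 𝕜 V, finrank 𝕜 H + 1 = finrank 𝕜 V ∧ x ∈ H ∧ y ∈ H := by
  classical
  have : FiniteDimensional 𝕜 V := FiniteDimensional.of_finrank_pos (by lia)
  have hspan : Submodule.span 𝕜 (({x, y} : Finset V) : Set V) ≠ ⊤ := by
    intro h
    have hle := finrank_span_finset_le_card (R := 𝕜) ({x, y} : Finset V)
    rw [Set.finrank, h, finrank_top] at hle
    exact absurd (hV.trans (hle.trans Finset.card_le_two)) (by norm_num)
  obtain ⟨H, hH, hle⟩ := exists_le_finrank_add_one_eq hspan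
  exact ⟨H, hH, hle (Submodule.subset_span (by simp)), hle (Submodule.subset_span (by simp))⟩

end Hyperplanes

theorem stmt7_general {𝕜 E : Type*} [DivisionRing 𝕜] [SMul ℝ 𝕜] [NormedAddCommGroup E]
    [NormedSpace ℝ E] [Module 𝕜 E] [IsScalarTower ℝ 𝕜 E] (hE : 3 ≤ finrank 𝕜 E) {K₁ K₂ : Set E}
    (hK₁ : IsCompact K₁) (hK₂ : IsCompact K₂) (hs₂ : StrictConvex ℝ K₂) (p₁ : E) {p₂ : E}
    (hp₂ : p₂ ∈ interior K₂)
    (hsec : ∀ H : Submodule 𝕜 E, finrank 𝕜 H + 1 = finrank 𝕜 E →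
      ∃ c, ((· + p₁) '' (H : Set E)) ∩ K₁ = (· + c) '' (((· + p₂) '' (H : Set E)) ∩ K₂)) :
    ∃ c, K₁ = (· + c) '' K₂ := by
  have : Nontrivial E := nontrivial_of_finrank_pos (R := 𝕜) (by lia)
  simp only [← Set.image_inter_preimage, exists_image_add_right_eq_iff] at hsec
  have hmeet (x y : E) : ∃ H : {H : Submodule 𝕜 E // finrank 𝕜 H + 1 = finrank 𝕜 E},
      x ∈ H.1.restrictScalars ℝ ∧ y ∈ H.1.restrictScalars ℝ := by
    obtain ⟨H, hH, hxy⟩ := exists_finrank_add_one_eq_mem_mem hE x y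
    exact ⟨⟨H, hH⟩, hxy⟩
  have hcompact {K : Set E} (hK : IsCompact K) (p : E) : IsCompact ((· + p) ⁻¹' K) :=
    (Homeomorph.addRight p).isCompact_preimage.2 hK
  have hzero : (0 : E) ∈ interior ((· + p₂) ⁻¹' K₂) := by
    rw [← Homeomorph.coe_addRight, ← Homeomorph.preimage_interior]
    simpa using hp₂
  have htranslate := exists_eq_image_add_right_of_sections (hcompact hK₁ p₁) (hcompact hK₂ p₂)
    (hs₂.preimage_add_left p₂) hzero _ hmeet fun H => hsec H.1 H.2
  simpa only [Set.image_preimage_eq _ (add_right_surjective _)] using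
    (exists_image_add_right_eq_iff p₁ p₂).2 htranslate

theorem stmt7 {n : ℕ} (hn : 3 ≤ n)
    (K₁ K₂ : Set (EuclideanSpace ℂ (Fin n)))
    (hK₁ : IsConvexBody K₁) (hK₂ : IsConvexBody K₂)
    (hs₁ : StrictConvex ℝ K₁) (hs₂ : StrictConvex ℝ K₂)
    (p₁ p₂ : EuclideanSpace ℂ (Fin n))
    (hp₁ : p₁ ∈ interior K₁) (hp₂ : p₂ ∈ interior K₂)
    (hsec : ∀ H : Submodule ℂ (EuclideanSpace ℂ (Fin n)),
      Module.finrank ℂ H = n - 1 →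
      IsTranslate (((· + p₂) '' (H : Set (EuclideanSpace ℂ (Fin n)))) ∩ K₂)
        (((· + p₁) '' (H : Set (EuclideanSpace ℂ (Fin n)))) ∩ K₁)) :
    IsTranslate K₂ K₁ :=
  stmt7_general (by rwa [finrank_euclideanSpace_fin]) hK₁.1 hK₂.1 hs₂ p₁ hp₂ fun H hH =>
    hsec H (Nat.eq_sub_of_add_eq (by rwa [finrank_euclideanSpace_fin] at hH))
end

section
/- Let K be a convex body in ℂⁿ with n ≥ 3 and x₀ an interior point of K. If for every complex hyperplane H through x₀ the section H ∩ K is complex-symmetric, then K is complex-symmetric. -/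
open scoped Pointwise

def IsComplexSymmetric {n : ℕ} (A : Set (EuclideanSpace ℂ (Fin n))) : Prop :=
  ∃ c : EuclideanSpace ℂ (Fin n),
    ∀ ξ : ℂ, ‖ξ‖ = 1 → ξ • ((· - c) '' A) = (· - c) '' A

/-!
Put `x₀ = 0` and let `μ ≤ 1` be the largest ratio with `-μ K ⊆ K`. Separating a boundary point
`-μ a` of `K`, with `a ∈ K`, from the interior gives a functional `φ` with `-μ ≤ Re φ ≤ 1` on `K`
and `Re φ = 1` at `a`.

If `μ = 1`, then `K = -K`. A section with centre `c` is then invariant under translation by `2 c`,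
so every section is centred at `0`, and so is `K`.

If `μ < 1`, a section through `a` with centre `c` is mapped into itself by the contraction
`x ↦ 2 c + μ x`, hence contains its fixed point `m = 2 c / (1 - μ)`; it follows that `-μ a` is
interior to a segment of `K` in direction `m - a`. So `m = a` as soon as the hyperplane meets the
direction space `V` of the minimal face of `K` at `-μ a` trivially. One such hyperplane exists:
choose `a` to be the only point of some hyperplane on the face `K ∩ {Re φ = 1}`. Then almost all
members of every pencil containing it avoid `V` as well, and because `n ≥ 3` these hyperplanes can
be made to pass through `a` and arbitrarily close to any given point. All the corresponding sections
have the centre `((1 - μ) / 2) a`, which is therefore a centre of `K`.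
-/

open Filter Topology Module

section RealConvexity

variable {E : Type*} [NormedAddCommGroup E] [NormedSpace ℝ E] {K : Set E}

lemma eq_zero_of_isBounded_of_forall_add_mem {v : E} (hK : Bornology.IsBounded K)
    (hne : K.Nonempty) (hadd : ∀ x ∈ K, x + v ∈ K) : v = 0 := by
  obtain ⟨x, hx⟩ := hne
  have hmem : ∀ k : ℕ, x + k • v ∈ K := fun k => by
    induction k with
    | zero => simpa using hx
    | succ k ih => simpa only [succ_nsmul, add_assoc] using hadd _ ih
  obtain ⟨R, hR⟩ := hK.exists_norm_le
  by_contra hv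
  obtain ⟨k, hk⟩ := Archimedean.arch (R + ‖x‖ + 1) (norm_pos_iff.2 hv)
  have hle : ‖k • v‖ ≤ R + ‖x‖ := by
    simpa using norm_sub_le_of_le (hR _ (hmem k)) le_rfl (a₂ := x)
  rw [← Nat.cast_smul_eq_nsmul ℝ, norm_smul, Real.norm_natCast, ← nsmul_eq_mul] at hle
  linarith

lemma mem_of_isClosed_of_mapsTo_homothety {m : E} {r : ℝ} (hK : IsClosed K) (hne : K.Nonempty)
    (hr₀ : 0 ≤ r) (hr₁ : r < 1) (hmaps : Set.MapsTo (AffineMap.homothety m r) K K) : m ∈ K := by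
  obtain ⟨x, hx⟩ := hne
  have hmem : ∀ k : ℕ, AffineMap.homothety m (r ^ k) x ∈ K := fun k => by
    induction k with
    | zero => simpa using hx
    | succ k ih => simpa only [pow_succ', AffineMap.homothety_mul_apply] using hmaps ih
  have hlim : Tendsto (fun k : ℕ => AffineMap.homothety m (r ^ k) x) atTop (𝓝 m) := by
    simpa [AffineMap.homothety_apply] using
      ((tendsto_pow_atTop_nhds_zero_of_lt_one hr₀ hr₁).smul_const (x - m)).add_const m
  exact hK.mem_of_tendsto hlim (Eventually.of_forall hmem)

lemma exists_neg_smul_mem_of_mem_interior [Nontrivial E] (hcomp : IsCompact K)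
    (hconv : Convex ℝ K) (h0 : 0 ∈ interior K) :
    ∃ μ : ℝ, 0 < μ ∧ (∀ x ∈ K, -(μ • x) ∈ K) ∧ ∃ a ∈ K, -(μ • a) ∉ interior K := by
  have hnhds : K ∈ 𝓝 (0 : E) := mem_interior_iff_mem_nhds.1 h0
  obtain ⟨a, haK, hmax⟩ := hcomp.exists_isMaxOn ⟨0, interior_subset h0⟩
    ((continuous_gauge hconv hnhds).comp continuous_neg).continuousOn
  set l := gauge K (-a) with hl
  have hle : ∀ x ∈ K, gauge K (-x) ≤ l := fun x hx => hmax hx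
  have hl_pos : 0 < l := by
    have := Module.punctured_nhds_neBot ℝ E 0
    obtain ⟨x, hxK, hx⟩ := (infinite_of_mem_nhds 0 hnhds).nontrivial.exists_ne 0
    refine lt_of_lt_of_le ?_ (hle x hxK)
    rw [gauge_pos (absorbent_nhds_zero hnhds)
      (NormedSpace.isVonNBounded_of_isBounded ℝ hcomp.isBounded)]
    exact neg_ne_zero.2 hx
  have hgauge : ∀ x, gauge K (-(l⁻¹ • x)) = l⁻¹ * gauge K (-x) := fun x => by
    rw [← smul_neg, gauge_smul_of_nonneg (inv_nonneg.2 hl_pos.le), smul_eq_mul]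
  refine ⟨l⁻¹, inv_pos.2 hl_pos, fun x hx => ?_, a, haK, fun hint => ?_⟩
  · rw [← hcomp.isClosed.closure_eq, ← gauge_le_one_iff_mem_closure hconv hnhds, hgauge,
      inv_mul_le_iff₀ hl_pos, mul_one]
    exact hle x hx
  · rw [← gauge_lt_one_iff_mem_interior hconv hnhds, hgauge, ← hl,
      inv_mul_cancel₀ hl_pos.ne'] at hint
    exact lt_irrefl _ hint

end RealConvexity

section MinimalFace

variable {E : Type*} [AddCommGroup E] [Module ℝ E] {K : Set E} {b v : E}

/-- The direction of the minimal face of the convex set `K` containing `b ∈ K`: the vectors `v`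
such that `b` is interior, relative to the line `b + ℝ v`, to the intersection of `K` with that
line. -/
def minimalFaceDirection (hK : Convex ℝ K) (hb : b ∈ K) : Submodule ℝ E where
  carrier := {v | ∀ᶠ s : ℝ in 𝓝 0, b + s • v ∈ K}
  zero_mem' := by simp [hb]
  add_mem' := by
    intro v w hv hw
    have hdouble : Tendsto (fun s : ℝ => 2 * s) (𝓝 0) (𝓝 0) :=
      (continuous_const_mul 2).tendsto' 0 0 (mul_zero 2)
    filter_upwards [hdouble.eventually hv, hdouble.eventually hw] with s hsv hsw
    convert hK.midpoint_mem hsv hsw using 1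
    rw [midpoint_eq_smul_add, invOf_eq_inv]
    module
  smul_mem' := by
    intro r v hv
    have hscale : Tendsto (fun s : ℝ => s * r) (𝓝 0) (𝓝 0) :=
      (continuous_mul_const r).tendsto' 0 0 (zero_mul r)
    filter_upwards [hscale.eventually hv] with s hs
    rwa [smul_smul]

lemma mem_minimalFaceDirection {hK : Convex ℝ K} {hb : b ∈ K} :
    v ∈ minimalFaceDirection hK hb ↔ ∀ᶠ s : ℝ in 𝓝 0, b + s • v ∈ K :=
  Iff.rfl

lemma mem_minimalFaceDirection_of_add_smul_mem_of_sub_smul_mem {hK : Convex ℝ K} {hb : b ∈ K}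
    {p q : ℝ} (hp : 0 < p) (hq : 0 < q) (hadd : b + p • v ∈ K) (hsub : b - q • v ∈ K) :
    v ∈ minimalFaceDirection hK hb := by
  have hline : ∀ s : ℝ, AffineMap.lineMap b (b + v) s = b + s • v := fun s => by
    simp [AffineMap.lineMap_apply, add_comm]
  have hord := (hK.affine_preimage (AffineMap.lineMap (k := ℝ) b (b + v))).ordConnected
  refine mem_of_superset (Icc_mem_nhds (neg_lt_zero.2 hq) hp) fun s hs => ?_
  have hs' := hord.out (x := -q) (y := p) (by simpa [hline, ← sub_eq_add_neg] using hsub)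
    (by simpa [hline] using hadd) hs
  simpa [hline] using hs'

lemma dual_eq_zero_of_mem_minimalFaceDirection {hK : Convex ℝ K} {hb : b ∈ K} {f : Dual ℝ E}
    (hmin : IsMinOn f K b) (hv : v ∈ minimalFaceDirection hK hb) : f v = 0 := by
  have hlocal : IsLocalMin (fun s : ℝ => f b + s * f v) 0 := by
    filter_upwards [mem_minimalFaceDirection.1 hv] with s hs
    simpa using hmin hs
  exact hlocal.hasDerivAt_eq_zero (((hasDerivAt_mul_const (f v)).const_add (f b)))

end MinimalFace

section LinearPencils

lemma finite_setOf_not_injective_add_smul {k V W : Type*} [Field k] [AddCommGroup V] [Module k V]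
    [FiniteDimensional k V] [AddCommGroup W] [Module k W] (f : V →ₗ[k] W) {g : V →ₗ[k] W}
    (hg : Function.Injective g) : {t : k | ¬ Function.Injective (f + t • g)}.Finite := by
  obtain ⟨ρ, hρ⟩ := g.exists_leftInverse_of_injective (LinearMap.ker_eq_bot.2 hg)
  refine ((End.finite_hasEigenvalue (ρ ∘ₗ f)).image Neg.neg).subset fun t ht => ?_
  -- A kernel vector `v` of `f + t • g` satisfies `f v = -t • g v`, hence `ρ (f v) = -t • v`.
  obtain ⟨v, hv, hv0⟩ : ∃ v, f v + t • g v = 0 ∧ v ≠ 0 := by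
    simpa [injective_iff_map_eq_zero] using ht
  have hρg : ρ (g v) = v := LinearMap.congr_fun hρ v
  refine ⟨-t, End.hasEigenvalue_of_hasEigenvector (x := v)
    ⟨End.mem_eigenspace_iff.2 ?_, hv0⟩, neg_neg t⟩
  rw [LinearMap.comp_apply, eq_neg_of_add_eq_zero_left hv, map_neg, map_smul, hρg, neg_smul]

lemma exists_dual_ne_zero_forall_mem_eq_zero {k V : Type*} [Field k] [AddCommGroup V] [Module k V]
    (s : Finset V) (hs : s.card < finrank k V) : ∃ ψ : Dual k V, ψ ≠ 0 ∧ ∀ x ∈ s, ψ x = 0 := by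
  have hlt : Submodule.span k (s : Set V) < ⊤ := by
    refine lt_top_iff_ne_top.2 fun htop => hs.not_ge ?_
    have hcard := finrank_span_finset_le_card (R := k) s
    rwa [Set.finrank, htop, finrank_top] at hcard
  obtain ⟨ψ, hψ, hle⟩ := Submodule.exists_le_ker_of_lt_top _ hlt
  exact ⟨ψ, hψ, fun x hx => hle (Submodule.subset_span hx)⟩

lemma exists_tendsto_of_dual_pencil {E : Type*} [NormedAddCommGroup E] [NormedSpace ℂ E]
    {ψ₁ : Dual ℂ E} (ψ₀ : Dual ℂ E) (hψ₁ : ψ₁ ≠ 0) {x : E} (hx : ψ₁ x = 0) :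
    ∃ y : ℝ → E, Tendsto y (𝓝 0) (𝓝 x) ∧
      ∀ᶠ t : ℝ in 𝓝 0, ψ₁ + (t : ℂ) • ψ₀ ≠ 0 ∧ (ψ₁ + (t : ℂ) • ψ₀) (y t) = 0 := by
  obtain ⟨u, hu⟩ := DFunLike.ne_iff.1 hψ₁
  have hcont : ∀ z, Continuous fun t : ℝ => (ψ₁ + (t : ℂ) • ψ₀) z := fun z => by
    simp only [LinearMap.add_apply, LinearMap.smul_apply]
    fun_prop
  have hu₀ : (ψ₁ + ((0 : ℝ) : ℂ) • ψ₀) u ≠ 0 := by simpa using hu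
  refine ⟨fun t => x - ((ψ₁ + (t : ℂ) • ψ₀) x / (ψ₁ + (t : ℂ) • ψ₀) u) • u, ?_, ?_⟩
  · have hquot := ((hcont x).tendsto 0).div ((hcont u).tendsto 0) hu₀
    simpa [hx] using (hquot.smul_const u).const_sub x
  · filter_upwards [(hcont u).continuousAt.eventually_ne hu₀] with t ht
    refine ⟨fun h => ht (by rw [h]; rfl), ?_⟩
    rw [map_sub, map_smul, smul_eq_mul, div_mul_cancel₀ _ ht, sub_self]

-- For `ψ₁` vanishing at `a` and `x`, all but finitely many members of the pencil `ψ₁ + t ψ₀` are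
-- injective on `V`.
lemma dense_setOf_exists_dual_disjoint {E : Type*} [NormedAddCommGroup E] [NormedSpace ℂ E]
    (hn : 3 ≤ finrank ℂ E) (V : Submodule ℝ E) {ψ₀ : Dual ℂ E} {a : E} (hψ₀a : ψ₀ a = 0)
    (hψ₀V : ∀ v ∈ V, ψ₀ v = 0 → v = 0) :
    Dense {x : E | ∃ ψ : Dual ℂ E, ψ ≠ 0 ∧ ψ a = 0 ∧ ψ x = 0 ∧ ∀ v ∈ V, ψ v = 0 → v = 0} := by
  classical
  have : FiniteDimensional ℂ E := Module.finite_of_finrank_pos (by lia)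
  have : FiniteDimensional ℝ E := FiniteDimensional.complexToReal E
  intro x
  obtain ⟨ψ₁, hψ₁, hvanish⟩ := exists_dual_ne_zero_forall_mem_eq_zero (k := ℂ) {a, x}
    (Finset.card_le_two.trans_lt hn)
  have hψ₁a : ψ₁ a = 0 := hvanish a (by simp)
  obtain ⟨y, hy, hker⟩ := exists_tendsto_of_dual_pencil ψ₀ hψ₁ (hvanish x (by simp))
  have hψ₀_inj : Function.Injective ((ψ₀.restrictScalars ℝ).domRestrict V) :=
    (injective_iff_map_eq_zero _).2 fun v hv => Subtype.ext (hψ₀V v v.2 hv)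
  have hinj : ∀ᶠ t : ℝ in 𝓝[≠] 0, Function.Injective
      ((ψ₁.restrictScalars ℝ).domRestrict V + t • (ψ₀.restrictScalars ℝ).domRestrict V) := by
    simpa using (finite_setOf_not_injective_add_smul ((ψ₁.restrictScalars ℝ).domRestrict V)
      hψ₀_inj).eventually_cofinite_notMem.filter_mono (nhdsNE_le_cofinite 0)
  refine mem_closure_of_tendsto (hy.mono_left nhdsWithin_le_nhds) (b := 𝓝[≠] 0) ?_
  filter_upwards [hinj, hker.filter_mono nhdsWithin_le_nhds] with t hinj_t ⟨hne, hyt⟩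
  refine ⟨_, hne, by simp [hψ₁a, hψ₀a], hyt, fun v hv hv₀ => ?_⟩
  exact congrArg Subtype.val ((injective_iff_map_eq_zero _).1 hinj_t ⟨v, hv⟩ hv₀)

end LinearPencils

section Farthest

lemma exists_mem_forall_inner_eq_imp_eq (𝕜 : Type*) {E : Type*} [RCLike 𝕜] [NormedAddCommGroup E]
    [InnerProductSpace 𝕜 E] {S : Set E} (hS : IsCompact S) (hne : S.Nonempty) :
    ∃ a ∈ S, ∀ x ∈ S, inner 𝕜 a x = inner 𝕜 a a → x = a := by
  obtain ⟨a, ha, hmax⟩ := hS.exists_isMaxOn hne continuous_norm.continuousOn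
  refine ⟨a, ha, fun x hx hax => eq_of_norm_le_re_inner_eq_norm_sq (𝕜 := 𝕜) (hmax hx) ?_⟩
  rw [inner_re_symm, hax, inner_self_eq_norm_sq]

lemma exists_mem_forall_dual_eq_imp_eq (𝕜 : Type*) {E : Type*} [RCLike 𝕜] [NormedAddCommGroup E]
    [NormedSpace 𝕜 E] [FiniteDimensional 𝕜 E] {S : Set E} (hS : IsCompact S) (hne : S.Nonempty) :
    ∃ a ∈ S, ∃ ψ : Dual 𝕜 E, ∀ x ∈ S, ψ x = ψ a → x = a := by
  let e : E ≃L[𝕜] EuclideanSpace 𝕜 (Fin (finrank 𝕜 E)) :=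
    ContinuousLinearEquiv.ofFinrankEq finrank_euclideanSpace_fin.symm
  obtain ⟨_, ⟨a, ha, rfl⟩, hmax⟩ :=
    exists_mem_forall_inner_eq_imp_eq 𝕜 (hS.image e.continuous) (hne.image e)
  exact ⟨a, ha, (innerSL 𝕜 (e a)).toLinearMap ∘ₗ e.toLinearMap, fun x hx hax =>
    e.injective (hmax _ (Set.mem_image_of_mem e hx) hax)⟩

lemma exists_dual_ne_zero_forall_mem_eq_zero_imp_eq {𝕜 E : Type*} [RCLike 𝕜]
    [NormedAddCommGroup E] [NormedSpace 𝕜 E] (hn : 2 ≤ finrank 𝕜 E) {S : Set E}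
    (hS : IsCompact S) (hne : S.Nonempty) {φ : Dual 𝕜 E} (hφ : ∀ x ∈ S, φ x = 1) :
    ∃ a ∈ S, ∃ ψ : Dual 𝕜 E, ψ ≠ 0 ∧ ψ a = 0 ∧ ∀ x ∈ S, ψ x = 0 → x = a := by
  have : FiniteDimensional 𝕜 E := Module.finite_of_finrank_pos (by lia)
  obtain ⟨a, ha, ℓ, hℓ⟩ := exists_mem_forall_dual_eq_imp_eq 𝕜 hS hne
  have hunique : ∀ x ∈ S, (ℓ - ℓ a • φ) x = 0 → x = a := fun x hx h =>
    hℓ x hx (by simpa [hφ x hx, sub_eq_zero] using h)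
  by_cases h₀ : ℓ - ℓ a • φ = 0
  · obtain ⟨ψ, hψ, hψa⟩ := exists_dual_ne_zero_forall_mem_eq_zero (k := 𝕜) {a}
      (by rw [Finset.card_singleton]; lia)
    exact ⟨a, ha, ψ, hψ, hψa a (by simp), fun x hx _ => hunique x hx (by rw [h₀]; rfl)⟩
  · exact ⟨a, ha, ℓ - ℓ a • φ, h₀, by simp [hφ a ha], hunique⟩

end Farthest

/-- `A` is invariant under every rotation `x ↦ c + ξ (x - c)` with `|ξ| = 1`; a set is
complex-symmetric when this holds for some centre `c`. -/
def IsComplexSymmetricAbout {E : Type*} [AddCommGroup E] [Module ℂ E] (c : E) (A : Set E) : Prop :=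
  ∀ ⦃ξ : ℂ⦄, ‖ξ‖ = 1 → ∀ ⦃x⦄, x ∈ A → ξ • (x - c) + c ∈ A

lemma isComplexSymmetric_iff_exists_isComplexSymmetricAbout {n : ℕ}
    {A : Set (EuclideanSpace ℂ (Fin n))} :
    IsComplexSymmetric A ↔ ∃ c, IsComplexSymmetricAbout c A := by
  refine exists_congr fun c => ⟨fun h ξ hξ x hx => ?_, fun h => ?_⟩
  · have hmem : ξ • (x - c) ∈ (· - c) '' A :=
      h ξ hξ ▸ Set.smul_mem_smul_set (Set.mem_image_of_mem _ hx)
    obtain ⟨y, hy, hyx⟩ := hmem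
    rwa [← hyx, sub_add_cancel]
  · have hsub : ∀ ξ : ℂ, ‖ξ‖ = 1 → ξ • ((· - c) '' A) ⊆ (· - c) '' A := by
      rintro ξ hξ _ ⟨_, ⟨x, hx, rfl⟩, rfl⟩
      exact ⟨_, h hξ hx, add_sub_cancel_right _ _⟩
    intro ξ hξ
    have hξ₀ : ξ ≠ 0 := norm_ne_zero_iff.1 (hξ ▸ one_ne_zero)
    refine (hsub ξ hξ).antisymm ((Set.subset_smul_set_iff₀ hξ₀).2 (hsub ξ⁻¹ ?_))
    rw [norm_inv, hξ, inv_one]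

namespace IsComplexSymmetricAbout

section Module

variable {E : Type*} [AddCommGroup E] [Module ℂ E] {A : Set E} {c x : E}

lemma preimage_add_iff {x₀ : E} :
    IsComplexSymmetricAbout c ((· + x₀) ⁻¹' A) ↔ IsComplexSymmetricAbout (c + x₀) A := by
  refine forall₂_congr fun ξ _ => ⟨fun h x hx => ?_, fun h x hx => ?_⟩
  · have hmem := h (x := x - x₀) (by simpa using hx)
    rw [Set.mem_preimage] at hmem
    convert hmem using 1
    module
  · rw [Set.mem_preimage]
    convert h hx using 1
    module

lemma reflection_mem (h : IsComplexSymmetricAbout c A) (hx : x ∈ A) : (2 : ℝ) • c - x ∈ A := by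
  convert h (ξ := -1) (by simp) hx using 1
  module

end Module

variable {E : Type*} [NormedAddCommGroup E] [NormedSpace ℂ E] {A : Set E} {c : E}

lemma center_eq_zero_of_forall_neg_mem (h : IsComplexSymmetricAbout c A)
    (hA : Bornology.IsBounded A) (hne : A.Nonempty) (hneg : ∀ x ∈ A, -x ∈ A) : c = 0 := by
  have hadd : ∀ x ∈ A, x + (2 : ℝ) • c ∈ A := fun x hx => by
    simpa [add_comm] using h.reflection_mem (hneg x hx)
  simpa using eq_zero_of_isBounded_of_forall_add_mem hA hne hadd

-- Composing `x ↦ -μ x` with the reflection in `c` gives the homothety of ratio `μ` centred at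
-- `(2 / (1 - μ)) c`.
lemma exists_mem_center_eq_smul (h : IsComplexSymmetricAbout c A) (hA : IsClosed A)
    (hne : A.Nonempty) {μ : ℝ} (hμ₀ : 0 ≤ μ) (hμ₁ : μ < 1) (hneg : ∀ x ∈ A, -(μ • x) ∈ A) :
    ∃ m ∈ A, c = ((1 - μ) / 2) • m := by
  have hμ : 1 - μ ≠ 0 := (sub_pos.2 hμ₁).ne'
  have hc : c = ((1 - μ) / 2) • (2 / (1 - μ)) • c := by
    match_scalars
    field_simp
  refine ⟨_, mem_of_isClosed_of_mapsTo_homothety hA hne hμ₀ hμ₁ fun x hx => ?_, hc⟩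
  convert h.reflection_mem (hneg x hx) using 1
  simp only [AffineMap.homothety_apply, vsub_eq_sub, vadd_eq_add]
  match_scalars <;> field_simp
  ring

end IsComplexSymmetricAbout

lemma re_dual_neg_smul {E : Type*} [AddCommGroup E] [Module ℂ E] (φ : Dual ℂ E) (r : ℝ) (x : E) :
    (φ (-(r • x))).re = -(r * (φ x).re) := by
  rw [map_neg, LinearMap.map_smul_of_tower, Complex.neg_re, Complex.smul_re, smul_eq_mul]

/-- `A` is mapped into itself by `x ↦ -μ x` and lies in the half-space `-μ ≤ Re φ`, hence in the
slab `-μ ≤ Re φ ≤ 1`. When `A` meets `Re φ = 1`, this `μ` is the largest ratio with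
`-μ A ⊆ A`. -/
structure IsAsymmetrySlab {E : Type*} [AddCommGroup E] [Module ℂ E] (A : Set E) (μ : ℝ)
    (φ : Dual ℂ E) : Prop where
  ratio_pos : 0 < μ
  neg_smul_mem : ∀ ⦃x⦄, x ∈ A → -(μ • x) ∈ A
  neg_ratio_le_re : ∀ ⦃x⦄, x ∈ A → -μ ≤ (φ x).re

lemma exists_isAsymmetrySlab {E : Type*} [NormedAddCommGroup E] [NormedSpace ℂ E] [Nontrivial E]
    {K : Set E} (hcomp : IsCompact K) (hconv : Convex ℝ K) (h0 : 0 ∈ interior K) :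
    ∃ (μ : ℝ) (φ : Dual ℂ E), IsAsymmetrySlab K μ φ ∧ ∃ a ∈ K, (φ a).re = 1 := by
  obtain ⟨μ, hμ, hneg, a, haK, ha⟩ := exists_neg_smul_mem_of_mem_interior hcomp hconv h0
  obtain ⟨f, hfa, hf⟩ :=
    RCLike.separate_convex_open_set (𝕜 := ℂ) h0 hconv.interior isOpen_interior ha
  have hf_le : ∀ x ∈ K, (f x).re ≤ 1 := fun x hx => by
    refine closure_minimal (fun y hy => (hf y hy).le)
      (isClosed_le (Complex.continuous_re.comp f.continuous) continuous_const) ?_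
    rw [hconv.closure_interior_eq_closure_of_nonempty_interior ⟨0, h0⟩]
    exact subset_closure hx
  have hre : ∀ x, ((-((μ : ℂ) • f)) x).re = -(μ * (f x).re) := fun x => by simp
  refine ⟨μ, -((μ : ℂ) • f), ⟨hμ, hneg, fun x hx => ?_⟩, a, haK, ?_⟩
  · exact (neg_le_neg (mul_le_of_le_one_right hμ.le (hf_le x hx))).trans_eq (hre x).symm
  · exact (hre a).trans (by simpa using hfa)

namespace IsAsymmetrySlab

section Module

variable {E : Type*} [AddCommGroup E] [Module ℂ E] {A : Set E} {μ : ℝ} {φ : Dual ℂ E} {a c : E}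

lemma re_le_one (hφ : IsAsymmetrySlab A μ φ) {x : E} (hx : x ∈ A) : (φ x).re ≤ 1 := by
  have h := hφ.neg_ratio_le_re (hφ.neg_smul_mem hx)
  rw [re_dual_neg_smul, neg_le_neg_iff] at h
  exact (mul_le_iff_le_one_right hφ.ratio_pos).1 h

lemma inter_ker (hφ : IsAsymmetrySlab A μ φ) (ψ : Dual ℂ E) :
    IsAsymmetrySlab (A ∩ LinearMap.ker ψ) μ φ where
  ratio_pos := hφ.ratio_pos
  neg_smul_mem _ hx := ⟨hφ.neg_smul_mem hx.1,
    neg_mem (Submodule.smul_of_tower_mem (LinearMap.ker ψ) μ hx.2)⟩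
  neg_ratio_le_re _ hx := hφ.neg_ratio_le_re hx.1

lemma ratio_le_one (hφ : IsAsymmetrySlab A μ φ) (ha : a ∈ A) (haφ : (φ a).re = 1) : μ ≤ 1 := by
  have hsq : μ * μ ≤ 1 := by
    simpa [re_dual_neg_smul, haφ] using
      hφ.re_le_one (hφ.neg_smul_mem (hφ.neg_smul_mem ha))
  nlinarith [hφ.ratio_pos]

lemma two_mul_re_center (hφ : IsAsymmetrySlab A μ φ) (hc : IsComplexSymmetricAbout c A)
    (ha : a ∈ A) (haφ : (φ a).re = 1) : 2 * (φ c).re = 1 - μ := by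
  have hre : ∀ x, (φ ((2 : ℝ) • c - x)).re = 2 * (φ c).re - (φ x).re := fun x => by
    rw [map_sub, LinearMap.map_smul_of_tower, Complex.sub_re, Complex.smul_re, smul_eq_mul]
  have hlower := hφ.neg_ratio_le_re (hc.reflection_mem ha)
  have hupper := hφ.re_le_one (hc.reflection_mem (hφ.neg_smul_mem ha))
  rw [hre, haφ] at hlower
  rw [hre, re_dual_neg_smul, haφ] at hupper
  linarith

lemma norm_apply_sub_center_le (hφ : IsAsymmetrySlab A μ φ) (hc : IsComplexSymmetricAbout c A)
    {x : E} (hx : x ∈ A) : ‖φ (x - c)‖ ≤ 1 - (φ c).re := by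
  obtain ⟨ξ, hξ, hnorm⟩ := Complex.exists_norm_eq_mul_self (φ (x - c))
  have h := hφ.re_le_one (hc hξ hx)
  rw [map_add, map_smul, smul_eq_mul, ← hnorm, Complex.add_re, Complex.ofReal_re] at h
  exact le_sub_iff_add_le.2 h

-- `φ` maps `A` into the disc of radius `1 - Re φ c` about `φ c`, and `a`, `-μ a` go to its
-- rightmost and leftmost points; so `φ a` and `-μ φ a` have the same imaginary part.
lemma apply_eq_one (hφ : IsAsymmetrySlab A μ φ) (hc : IsComplexSymmetricAbout c A)
    (ha : a ∈ A) (haφ : (φ a).re = 1) : φ a = 1 := by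
  have hcenter := hφ.two_mul_re_center hc ha haφ
  have him : ∀ x ∈ A, |(φ (x - c)).re| = 1 - (φ c).re → (φ x).im = (φ c).im := fun x hx h => by
    have hzero : (φ (x - c)).im = 0 := Complex.abs_re_eq_norm.1
      ((Complex.abs_re_le_norm _).antisymm (h ▸ hφ.norm_apply_sub_center_le hc hx))
    rwa [map_sub, Complex.sub_im, sub_eq_zero] at hzero
  have hradius : 0 ≤ 1 - (φ c).re :=
    (norm_nonneg _).trans (hφ.norm_apply_sub_center_le hc ha)
  have hima := him a ha (by rw [map_sub, Complex.sub_re, haφ, abs_of_nonneg hradius])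
  have himb := him _ (hφ.neg_smul_mem ha) (by
    rw [map_sub, Complex.sub_re, re_dual_neg_smul, haφ, ← abs_neg, abs_of_nonneg] <;> linarith)
  rw [map_neg, LinearMap.map_smul_of_tower, Complex.neg_im, Complex.smul_im, smul_eq_mul,
    ← hima] at himb
  have him_zero : (φ a).im = 0 := by nlinarith [hφ.ratio_pos]
  exact Complex.ext haφ him_zero

-- The reflection in `c` sends `-μ a + s v`, for small `s`, into `A ∩ ker ψ ∩ {Re φ = 1} = {a}`.
lemma eq_zero_of_mem_minimalFaceDirection (hφ : IsAsymmetrySlab A μ φ) (hA : Convex ℝ A)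
    {ψ : Dual ℂ E} (hc : IsComplexSymmetricAbout c (A ∩ LinearMap.ker ψ)) (ha : a ∈ A)
    (haφ : (φ a).re = 1) (haψ : ψ a = 0)
    (hunique : ∀ x ∈ A, (φ x).re = 1 → ψ x = 0 → x = a) {v : E}
    (hv : v ∈ minimalFaceDirection hA (hφ.neg_smul_mem ha)) (hψv : ψ v = 0) : v = 0 := by
  have hcenter := (hφ.inter_ker ψ).two_mul_re_center hc ⟨ha, haψ⟩ haφ
  have hφv : (φ v).re = 0 := by
    refine dual_eq_zero_of_mem_minimalFaceDirection
      (f := Complex.reLm ∘ₗ φ.restrictScalars ℝ) (fun x hx => ?_) hv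
    simpa [re_dual_neg_smul, haφ] using hφ.neg_ratio_le_re hx
  have hreflect : ∀ s : ℝ, -(μ • a) + s • v ∈ A → (2 : ℝ) • c - (-(μ • a) + s • v) = a := by
    intro s hs
    have hmem := hc.reflection_mem ⟨hs, add_mem
      (neg_mem (Submodule.smul_of_tower_mem (LinearMap.ker ψ) μ haψ))
      (Submodule.smul_of_tower_mem (LinearMap.ker ψ) s hψv)⟩
    refine hunique _ hmem.1 ?_ hmem.2
    rw [map_sub, map_add, LinearMap.map_smul_of_tower, LinearMap.map_smul_of_tower,
      Complex.sub_re, Complex.add_re, re_dual_neg_smul, Complex.smul_re, Complex.smul_re, hφv, haφ]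
    simp only [smul_eq_mul]
    linarith
  obtain ⟨s, hs, hs₀⟩ :=
    (((mem_minimalFaceDirection.1 hv).filter_mono nhdsWithin_le_nhds).and
      (self_mem_nhdsWithin (s := {(0 : ℝ)}ᶜ))).exists
  have heq := (hreflect s hs).trans (hreflect 0 (by simpa using hφ.neg_smul_mem ha)).symm
  have hsv : s • v = 0 := by simpa using sub_right_injective heq
  exact (smul_eq_zero.1 hsv).resolve_left hs₀

end Module

variable {E : Type*} [NormedAddCommGroup E] [NormedSpace ℂ E] {K : Set E} {μ : ℝ}
  {φ ψ : Dual ℂ E} {a c : E}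

-- If `c = ((1 - μ) / 2) m`, the points `2 c - a` and `-μ m` of `K` lie on the line through
-- `-μ a` in direction `m - a`, on opposite sides of `-μ a`.
lemma center_eq_smul (hφ : IsAsymmetrySlab K μ φ) (hμ : μ < 1) (hK : Convex ℝ K)
    (hc : IsComplexSymmetricAbout c (K ∩ LinearMap.ker ψ))
    (hclosed : IsClosed (K ∩ LinearMap.ker ψ)) (ha : a ∈ K) (haψ : ψ a = 0)
    (hdisj : ∀ v ∈ minimalFaceDirection hK (hφ.neg_smul_mem ha), ψ v = 0 → v = 0) :
    c = ((1 - μ) / 2) • a := by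
  obtain ⟨m, hm, hcm⟩ := hc.exists_mem_center_eq_smul hclosed ⟨a, ha, haψ⟩ hφ.ratio_pos.le hμ
    (hφ.inter_ker ψ).neg_smul_mem
  have hdir : m - a ∈ minimalFaceDirection hK (hφ.neg_smul_mem ha) := by
    refine mem_minimalFaceDirection_of_add_smul_mem_of_sub_smul_mem (sub_pos.2 hμ)
      hφ.ratio_pos ?_ ?_
    · convert (hc.reflection_mem ⟨ha, haψ⟩).1 using 1
      rw [hcm]
      module
    · convert hφ.neg_smul_mem hm.1 using 1
      module
  rw [hcm, sub_eq_zero.1 (hdisj _ hdir (sub_mem hm.2 haψ))]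

end IsAsymmetrySlab

section HyperplaneSections

variable {E : Type*} [NormedAddCommGroup E] [NormedSpace ℂ E] {K : Set E}

lemma isComplexSymmetricAbout_zero_of_forall_neg_mem (hn : 2 ≤ finrank ℂ E)
    (hK : Bornology.IsBounded K) (h0 : 0 ∈ K) (hneg : ∀ x ∈ K, -x ∈ K)
    (hsec : ∀ ψ : Dual ℂ E, ψ ≠ 0 → ∃ c, IsComplexSymmetricAbout c (K ∩ LinearMap.ker ψ)) :
    IsComplexSymmetricAbout 0 K := by
  intro ξ hξ x hx
  obtain ⟨ψ, hψ, hψx⟩ := exists_dual_ne_zero_forall_mem_eq_zero (k := ℂ) {x}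
    (by rw [Finset.card_singleton]; lia)
  obtain ⟨c, hc⟩ := hsec ψ hψ
  obtain rfl : c = 0 := hc.center_eq_zero_of_forall_neg_mem (hK.subset Set.inter_subset_left)
    ⟨0, h0, zero_mem _⟩ fun y hy => ⟨hneg y hy.1, neg_mem hy.2⟩
  exact (hc hξ ⟨hx, hψx x (by simp)⟩).1

lemma isComplexSymmetricAbout_of_forall_disjoint_ker (hn : 3 ≤ finrank ℂ E) (hclosed : IsClosed K)
    (hconv : Convex ℝ K) (hint : (interior K).Nonempty) {V : Submodule ℝ E} {ψ₀ : Dual ℂ E}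
    {a c : E} (hψ₀a : ψ₀ a = 0) (hψ₀V : ∀ v ∈ V, ψ₀ v = 0 → v = 0)
    (hsec : ∀ ψ : Dual ℂ E, ψ ≠ 0 → ψ a = 0 → (∀ v ∈ V, ψ v = 0 → v = 0) →
      IsComplexSymmetricAbout c (K ∩ LinearMap.ker ψ)) :
    IsComplexSymmetricAbout c K := by
  intro ξ hξ x hx
  have hcont : Continuous fun z : E => ξ • (z - c) + c := by fun_prop
  have hdense := dense_setOf_exists_dual_disjoint hn V hψ₀a hψ₀V
  have hsub : closure (interior K) ⊆ (fun z => ξ • (z - c) + c) ⁻¹' K := by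
    refine (closure_minimal (hdense.open_subset_closure_inter isOpen_interior)
      isClosed_closure).trans (closure_minimal ?_ (hclosed.preimage hcont))
    rintro y ⟨hy, ψ, hψ, hψa, hψy, hψV⟩
    exact (hsec ψ hψ hψa hψV hξ ⟨interior_subset hy, hψy⟩).1
  rw [hconv.closure_interior_eq_closure_of_nonempty_interior hint] at hsub
  exact hsub (subset_closure hx)

theorem exists_isComplexSymmetricAbout_of_forall_inter_ker (hn : 3 ≤ finrank ℂ E)
    (hcomp : IsCompact K) (hconv : Convex ℝ K) (h0 : 0 ∈ interior K)
    (hsec : ∀ ψ : Dual ℂ E, ψ ≠ 0 → ∃ c, IsComplexSymmetricAbout c (K ∩ LinearMap.ker ψ)) :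
    ∃ c, IsComplexSymmetricAbout c K := by
  have : FiniteDimensional ℂ E := Module.finite_of_finrank_pos (by lia)
  have : Nontrivial E := Module.nontrivial_of_finrank_pos (R := ℂ) (by lia)
  obtain ⟨μ, φ, hφ, hface⟩ := exists_isAsymmetrySlab hcomp hconv h0
  obtain rfl | hμ := (hφ.ratio_le_one hface.choose_spec.1 hface.choose_spec.2).eq_or_lt
  · exact ⟨0, isComplexSymmetricAbout_zero_of_forall_neg_mem (by lia) hcomp.isBounded
      (interior_subset h0) (by simpa using hφ.neg_smul_mem) hsec⟩
  have hφ_one : ∀ x ∈ K ∩ {x | (φ x).re = 1}, φ x = 1 := by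
    rintro x ⟨hx, hφx⟩
    obtain ⟨ψ, hψ, hψx⟩ := exists_dual_ne_zero_forall_mem_eq_zero (k := ℂ) {x}
      (by rw [Finset.card_singleton]; lia)
    obtain ⟨c, hc⟩ := hsec ψ hψ
    exact (hφ.inter_ker ψ).apply_eq_one hc ⟨hx, hψx x (by simp)⟩ hφx
  have hface_comp : IsCompact (K ∩ {x | (φ x).re = 1}) := hcomp.inter_right <|
    isClosed_eq (Complex.continuous_re.comp φ.continuous_of_finiteDimensional) continuous_const
  obtain ⟨a, ⟨ha, haφ⟩, ψ₀, hψ₀, hψ₀a, hunique⟩ :=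
    exists_dual_ne_zero_forall_mem_eq_zero_imp_eq (by lia) hface_comp hface hφ_one
  obtain ⟨c₀, hc₀⟩ := hsec ψ₀ hψ₀
  refine ⟨((1 - μ) / 2) • a, isComplexSymmetricAbout_of_forall_disjoint_ker hn hcomp.isClosed hconv
    ⟨0, h0⟩ (V := minimalFaceDirection hconv (hφ.neg_smul_mem ha)) hψ₀a
    (fun v => hφ.eq_zero_of_mem_minimalFaceDirection hconv hc₀ ha haφ hψ₀a
      fun x hx hφx => hunique x ⟨hx, hφx⟩) fun ψ hψ hψa hdisj => ?_⟩
  obtain ⟨c, hc⟩ := hsec ψ hψ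
  have hclosed := hcomp.isClosed.inter (LinearMap.ker ψ).closed_of_finiteDimensional
  rwa [← hφ.center_eq_smul hμ hconv hc hclosed ha hψa hdisj]

theorem stmt8_general (hn : 3 ≤ finrank ℂ E) (hcomp : IsCompact K) (hconv : Convex ℝ K) {x₀ : E}
    (hx₀ : x₀ ∈ interior K)
    (hsec : ∀ H : Submodule ℂ E, finrank ℂ H + 1 = finrank ℂ E →
      ∃ c, IsComplexSymmetricAbout c ((· + x₀) '' (H : Set E) ∩ K)) :
    ∃ c, IsComplexSymmetricAbout c K := by
  have : FiniteDimensional ℂ E := Module.finite_of_finrank_pos (by lia)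
  let e := Homeomorph.addRight x₀
  suffices ∃ c, IsComplexSymmetricAbout c (e ⁻¹' K) from
    this.imp' (· + x₀) fun _ => IsComplexSymmetricAbout.preimage_add_iff.1
  refine exists_isComplexSymmetricAbout_of_forall_inter_ker hn (e.isCompact_preimage.2 hcomp)
    (hconv.translate_preimage_left x₀) ?_ fun ψ hψ => ?_
  · rw [← e.preimage_interior]
    simpa [e] using hx₀
  · obtain ⟨c, hc⟩ := hsec (LinearMap.ker ψ) (Dual.finrank_ker_add_one_of_ne_zero hψ)
    refine ⟨c - x₀, ?_⟩
    have hinter : e ⁻¹' K ∩ LinearMap.ker ψ =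
        (· + x₀) ⁻¹' ((· + x₀) '' (LinearMap.ker ψ : Set E) ∩ K) := by
      rw [Set.preimage_inter, Set.preimage_image_eq _ (add_left_injective x₀), Set.inter_comm]
      rfl
    rwa [hinter, IsComplexSymmetricAbout.preimage_add_iff, sub_add_cancel]

end HyperplaneSections

theorem stmt8 {n : ℕ} (hn : 3 ≤ n)
    (K : Set (EuclideanSpace ℂ (Fin n))) (hK : IsConvexBody K)
    (x₀ : EuclideanSpace ℂ (Fin n)) (hx₀ : x₀ ∈ interior K)
    (hsec : ∀ H : Submodule ℂ (EuclideanSpace ℂ (Fin n)),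
      Module.finrank ℂ H = n - 1 →
      IsComplexSymmetric (((· + x₀) '' (H : Set (EuclideanSpace ℂ (Fin n)))) ∩ K)) :
    IsComplexSymmetric K := by
  simp only [isComplexSymmetric_iff_exists_isComplexSymmetricAbout] at hsec ⊢
  refine stmt8_general (by simpa using hn) hK.1 hK.2.1 hx₀ fun H hH => hsec H ?_
  rw [finrank_euclideanSpace_fin] at hH
  exact Nat.eq_sub_of_add_eq hH
end
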